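/- Let S be an AG-groupoid, B a bi-ideal of S, and f a fuzzy subset of S such that f(x) = 0 for all x ∈ S \ B and f(x) ≥ 0.5 for all x ∈ B. Then: (i) for all x, y, z ∈ S and t, r ∈ (0,1], if f(x) + t > 1 and f(y) + r > 1 then f(xy) ≥ min(t,r) or f(xy) + min(t,r) > 1, and if f(x) + t > 1 and f(z) + r > 1 then f((xy)z) ≥ min(t,r) or f((xy)z) + min(t,r) > 1 (that is, f is a (q,∈∨q)-fuzzy bi-ideal of S); (ii) f is an (∈,∈∨q)-fuzzy bi-ideal of S. -/

import Mathlib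

/-- An AG-groupoid: a magma satisfying the left invertive law `(ab)c = (cb)a`. -/
def LeftInvertive (S : Type*) [Mul S] : Prop := ∀ a b c : S, a * b * c = c * b * a

/-- A fuzzy subset: a function into `[0,1]`. -/
def IsFuzzy {S : Type*} (f : S → ℝ) : Prop := ∀ x, 0 ≤ f x ∧ f x ≤ 1

section FuzzyPoints

variable {S K : Type*}

/-- The fuzzy point `x_t` is quasi-coincident with `f`, written `x_t q f`. -/
def QuasiCoincident [Add K] [One K] [LT K] (f : S → K) (x : S) (t : K) : Prop :=
  1 < f x + t

/-- The relation `x_t ∈∨q f`: the fuzzy point `x_t` belongs to `f`, that is `t ≤ f x`, or is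
quasi-coincident with `f`. -/
def MemOrQuasiCoincident [Add K] [One K] [LE K] [LT K] (f : S → K) (x : S) (t : K) : Prop :=
  t ≤ f x ∨ QuasiCoincident f x t

theorem QuasiCoincident.mem_of_eq_zero_off [AddZeroClass K] [One K] [Preorder K]
    {f : S → K} {B : Set S} {x : S} {t : K} (hq : QuasiCoincident f x t) (ht : t ≤ 1)
    (h0 : ∀ x ∉ B, f x = 0) : x ∈ B := by
  by_contra hx
  have one_lt_t : 1 < t := by simpa only [QuasiCoincident, h0 x hx, zero_add] using hq
  exact one_lt_t.not_ge ht

theorem memOrQuasiCoincident_of_half_le [Field K] [LinearOrder K] [IsStrictOrderedRing K]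
    {f : S → K} {x : S} (hx : 1 / 2 ≤ f x) (t : K) : MemOrQuasiCoincident f x t :=
  (le_or_gt t (f x)).imp_right fun (hlt : f x < t) ↦
    calc
      (1 : K) = 1 / 2 + 1 / 2 := (add_halves 1).symm
      _ < f x + t := add_lt_add_of_le_of_lt hx (hx.trans_lt hlt)

theorem min_min_le_of_mem_imp_mem [Zero K] [LinearOrder K] {f : S → K} {B : Set S} {c : K}
    (h0 : ∀ x ∉ B, f x = 0) (hc : ∀ x ∈ B, c ≤ f x) {x y w : S}
    (hw : x ∈ B → y ∈ B → w ∈ B) : min (min (f x) (f y)) c ≤ f w := by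
  by_cases hwB : w ∈ B
  · exact min_le_of_right_le (hc w hwB)
  · have not_mem_or : x ∉ B ∨ y ∉ B := by tauto
    have min_le_zero : min (f x) (f y) ≤ 0 :=
      min_le_iff.2 (not_mem_or.imp (fun hx ↦ (h0 x hx).le) fun hy ↦ (h0 y hy).le)
    exact min_le_of_left_le (min_le_zero.trans_eq (h0 w hwB).symm)

end FuzzyPoints

section BiIdeals

variable {S K : Type*} [Mul S]

/-- The `(q,∈∨q)`-fuzzy bi-ideal condition on `f`, with fuzzy points of height in `(0,1]`. The
range of `f` is not restricted to `[0,1]`. -/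
def IsQMemOrQFuzzyBiIdeal [Add K] [Zero K] [One K] [LinearOrder K] (f : S → K) : Prop :=
  (∀ (x y : S) (t r : K), 0 < t → t ≤ 1 → 0 < r → r ≤ 1 →
    QuasiCoincident f x t → QuasiCoincident f y r → MemOrQuasiCoincident f (x * y) (min t r)) ∧
  (∀ (x y z : S) (t r : K), 0 < t → t ≤ 1 → 0 < r → r ≤ 1 →
    QuasiCoincident f x t → QuasiCoincident f z r → MemOrQuasiCoincident f (x * y * z) (min t r))

/-- The `(∈,∈∨q)`-fuzzy bi-ideal condition on `f`, in its pointwise form. The range of `f` is not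
restricted to `[0,1]`. -/
def IsMemMemOrQFuzzyBiIdeal [Field K] [LinearOrder K] (f : S → K) : Prop :=
  (∀ x y : S, min (min (f x) (f y)) (1 / 2) ≤ f (x * y)) ∧
  (∀ x y z : S, min (min (f x) (f z)) (1 / 2) ≤ f (x * y * z))

theorem fuzzy_biIdeal_of_biIdeal_general [Field K] [LinearOrder K] [IsStrictOrderedRing K]
    {B : Set S} (hBB : ∀ x ∈ B, ∀ y ∈ B, x * y ∈ B)
    (hBSB : ∀ x ∈ B, ∀ s : S, ∀ z ∈ B, x * s * z ∈ B)
    {f : S → K} (h0 : ∀ x ∉ B, f x = 0) (h5 : ∀ x ∈ B, 1 / 2 ≤ f x) :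
    IsQMemOrQFuzzyBiIdeal f ∧ IsMemMemOrQFuzzyBiIdeal f := by
  refine ⟨⟨fun x y t r _ ht _ hr hx hy ↦ ?_, fun x y z t r _ ht _ hr hx hz ↦ ?_⟩,
    fun x y ↦ ?_, fun x y z ↦ ?_⟩
  · have hxy : x * y ∈ B := hBB x (hx.mem_of_eq_zero_off ht h0) y (hy.mem_of_eq_zero_off hr h0)
    exact memOrQuasiCoincident_of_half_le (h5 _ hxy) _
  · have hxyz : x * y * z ∈ B :=
      hBSB x (hx.mem_of_eq_zero_off ht h0) y z (hz.mem_of_eq_zero_off hr h0)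
    exact memOrQuasiCoincident_of_half_le (h5 _ hxyz) _
  · exact min_min_le_of_mem_imp_mem h0 h5 fun hx hy ↦ hBB x hx y hy
  · exact min_min_le_of_mem_imp_mem h0 h5 fun hx hz ↦ hBSB x hx y z hz

end BiIdeals

/-- if `B` is a bi-ideal of `S` and `f` vanishes off `B` and is `≥ 0.5` on `B`,
then (i) `f` is a `(q,∈∨q)`-fuzzy bi-ideal of `S`, and (ii) `f` is an `(∈,∈∨q)`-fuzzy
bi-ideal of `S`. -/
theorem fuzzy_biIdeal_of_biIdeal {S : Type*} [Mul S] (hS : LeftInvertive S)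
    (B : Set S) (hBne : B.Nonempty)
    (hBB : ∀ x ∈ B, ∀ y ∈ B, x * y ∈ B)
    (hBSB : ∀ x ∈ B, ∀ s : S, ∀ z ∈ B, x * s * z ∈ B)
    (f : S → ℝ) (hf : IsFuzzy f)
    (h0 : ∀ x ∉ B, f x = 0) (h5 : ∀ x ∈ B, (1 / 2 : ℝ) ≤ f x) :
    ((∀ (x y : S) (t r : ℝ), 0 < t → t ≤ 1 → 0 < r → r ≤ 1 →
        1 < f x + t → 1 < f y + r →
        (min t r ≤ f (x * y) ∨ 1 < f (x * y) + min t r)) ∧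
      (∀ (x y z : S) (t r : ℝ), 0 < t → t ≤ 1 → 0 < r → r ≤ 1 →
        1 < f x + t → 1 < f z + r →
        (min t r ≤ f (x * y * z) ∨ 1 < f (x * y * z) + min t r))) ∧
    ((∀ x y : S, min (min (f x) (f y)) (1 / 2) ≤ f (x * y)) ∧
      (∀ x y z : S, min (min (f x) (f z)) (1 / 2) ≤ f (x * y * z))) :=
  fuzzy_biIdeal_of_biIdeal_general hBB hBSB h0 h5
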